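/- For all integrable real random variables η¹ and η², one has |L(η¹) − L(η²)| ≤ κ 𝐄[|η¹ − η²|]. -/

import Mathlib

open MeasureTheory Filter Topology

/-- The operator `L(η) := inf {x ≥ 0 : 𝐄[ℓ(·, x+η)] ≥ 0}`. -/
noncomputable def Lop {Ω : Type*} [MeasurableSpace Ω] (P : Measure Ω)
    (ℓ : Ω → ℝ → ℝ) (η : Ω → ℝ) : ℝ :=
  sInf {x : ℝ | 0 ≤ x ∧ 0 ≤ ∫ ω, ℓ ω (x + η ω) ∂P}

/-- Lipschitz estimate for `L`: for all integrable `η¹, η²`,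
`|L(η¹) − L(η²)| ≤ κ 𝐄[|η¹ − η²|]`. -/
theorem stmt2 {Ω : Type*} [MeasurableSpace Ω] (P : Measure Ω) [IsProbabilityMeasure P]
    (ℓ : Ω → ℝ → ℝ)
    (hmeas : Measurable (fun p : Ω × ℝ => ℓ p.1 p.2))
    (hcont : ∀ ω, Continuous (fun y => ℓ ω y))
    (hmono : ∀ ω, StrictMono (fun y => ℓ ω y))
    (L₀ : ℝ) (hL₀ : 0 < L₀)
    (hgrowth : ∀ ω y, |ℓ ω y| ≤ L₀ * (1 + |y|))
    (l : EReal) (hl : 0 < l)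
    (hlim : Tendsto (fun x : ℝ => ((∫ ω, ℓ ω x ∂P : ℝ) : EReal)) atTop (𝓝 l))
    (κ C : ℝ) (hκ : 1 < κ) (hC : 0 < C)
    (hbilip : ∀ ω y₁ y₂, C * |y₁ - y₂| ≤ |ℓ ω y₁ - ℓ ω y₂| ∧
      |ℓ ω y₁ - ℓ ω y₂| ≤ κ * C * |y₁ - y₂|)
    (η₁ η₂ : Ω → ℝ) (hη₁ : Integrable η₁ P) (hη₂ : Integrable η₂ P) :
    |Lop P ℓ η₁ - Lop P ℓ η₂| ≤ κ * ∫ ω, |η₁ ω - η₂ ω| ∂P := by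
  have hint : ∀ (η : Ω → ℝ), Integrable η P → ∀ x : ℝ,
      Integrable (fun ω => ℓ ω (x + η ω)) P := by
    intro η hη x
    have hg : Integrable (fun ω => L₀ * (1 + |x + η ω|)) P :=
      ((integrable_const (1 : ℝ)).add ((integrable_const x).add hη).abs).const_mul L₀
    have hm : AEMeasurable (fun ω => ℓ ω (x + η ω)) P :=
      hmeas.comp_aemeasurable (aemeasurable_id.prodMk (hη.aemeasurable.const_add x))
    refine hg.mono' hm.aestronglyMeasurable (Eventually.of_forall fun ω => ?_)
    rw [Real.norm_eq_abs]
    exact hgrowth ω _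
  have hup : ∀ ω (y d : ℝ), 0 ≤ d → ℓ ω y + C * d ≤ ℓ ω (d + y) := by
    intro ω y d hd
    have h := (hbilip ω (d + y) y).1
    have h2 : ℓ ω y ≤ ℓ ω (d + y) := (hmono ω).monotone (by linarith)
    rw [abs_of_nonneg (sub_nonneg.2 h2), add_sub_cancel_right, abs_of_nonneg hd] at h
    linarith
  have hne : ∀ (η : Ω → ℝ), Integrable η P →
      {x : ℝ | 0 ≤ x ∧ 0 ≤ ∫ ω, ℓ ω (x + η ω) ∂P}.Nonempty := by
    intro η hη
    have hi : Integrable (fun ω => ℓ ω (η ω)) P := by simpa using hint η hη 0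
    set E := ∫ ω, ℓ ω (η ω) ∂P with hE
    have hx : 0 ≤ |E| / C := by positivity
    refine ⟨|E| / C, hx, ?_⟩
    have h := integral_mono (hi.add (integrable_const (C * (|E| / C)))) (hint η hη (|E| / C))
      (fun ω => hup ω (η ω) _ hx)
    have h3 : ∫ ω, (ℓ ω (η ω) + C * (|E| / C)) ∂P = E + |E| := by
      rw [integral_add hi (integrable_const _), integral_const, ← hE]
      simp
      field_simp
    have h4 := neg_abs_le E
    have h5 : E + |E| ≤ ∫ ω, ℓ ω (|E| / C + η ω) ∂P := h3 ▸ h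
    linarith
  have key : ∀ (η ξ : Ω → ℝ), Integrable η P → Integrable ξ P →
      Lop P ℓ η ≤ Lop P ℓ ξ + κ * ∫ ω, |η ω - ξ ω| ∂P := by
    intro η ξ hη hξ
    have hD : Integrable (fun ω => |η ω - ξ ω|) P := (hη.sub hξ).abs
    set D := ∫ ω, |η ω - ξ ω| ∂P with hDdef
    have hD0 : 0 ≤ D := integral_nonneg fun ω => abs_nonneg _
    have hd : 0 ≤ κ * D := by positivity
    rw [← sub_le_iff_le_add]
    refine le_csInf (hne ξ hξ) ?_
    rintro x ⟨hx0, hx⟩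
    rw [sub_le_iff_le_add]
    refine csInf_le ⟨0, fun y hy => hy.1⟩ ⟨by positivity, ?_⟩
    have hi1 : Integrable (fun ω => ℓ ω (x + ξ ω) + C * (κ * D)) P :=
      (hint ξ hξ x).add (integrable_const (μ := P) (C * (κ * D)))
    have h : ∫ ω, ((ℓ ω (x + ξ ω) + C * (κ * D)) - κ * C * |η ω - ξ ω|) ∂P
        ≤ ∫ ω, ℓ ω (x + κ * D + η ω) ∂P := by
      refine integral_mono (hi1.sub (hD.const_mul (κ * C))) (hint η hη _) (fun ω => ?_)
      have h1 := hup ω (x + η ω) _ hd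
      have h2 := (hbilip ω (x + η ω) (x + ξ ω)).2
      rw [add_sub_add_left_eq_sub] at h2
      have h3 := (abs_le.1 h2).1
      have h4 : x + κ * D + η ω = κ * D + (x + η ω) := by ring
      simp only [h4]
      linarith
    have h5 : ∫ ω, ((ℓ ω (x + ξ ω) + C * (κ * D)) - κ * C * |η ω - ξ ω|) ∂P
        = ∫ ω, ℓ ω (x + ξ ω) ∂P + C * (κ * D) - κ * C * D := by
      rw [integral_sub hi1 (hD.const_mul (κ * C)),
        integral_add (hint ξ hξ x) (integrable_const _), integral_const_mul, integral_const]
      simp [hDdef]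
      exact integral_const_mul _ _
    rw [h5] at h
    have h6 : C * (κ * D) = κ * C * D := by ring
    linarith
  have k1 := key η₁ η₂ hη₁ hη₂
  have k2 := key η₂ η₁ hη₂ hη₁
  simp only [abs_sub_comm (η₂ _) (η₁ _)] at k2
  rw [abs_le]
  constructor <;> linarith
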